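/- For any non-hook-shaped partition λ of n with n ≥ 6, the number of fixed points of the involution t_3 on SYT(λ) is strictly greater than |SYT(λ)|/3. -/

import Mathlib

/-!
Call a tableau *fixed* if `t₃` fixes it. By the description of the Bender–Knuth involutions
(`BK_eq_self` and `BK_entry`), `t_k` moves a tableau exactly when the boxes of `k` and `k + 1`
are not neighbours.

If `t₃` moves `T`, then the entries `1, 2, 3, 4` occupy a hook with four boxes, and exactly one of
`3` and `4` is a neighbour of `2` (`nbr_two`). If it is `4`, then `t₂` moves `T`, and `3` and `4`
are neighbours in `t₂ T`; if it is `3`, the same applies to `t₃ T`. Hence every moved tableau lies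
in one of the sets `N₁ = {T moved | t₂ T fixed}` and `N₂ = {T moved | t₂ t₃ T fixed}`
(`moved_cover`), and `t₂` and `t₂ t₃` inject these into the set of fixed tableaux.

Neither injection is surjective: a tableau `T₀` whose entry `4` is in the box `(1, 1)` is fixed, and
so is `t₂ T₀`, so that `T₀` is the image of no moved tableau. Such a `T₀` exists because the shape
is not a hook (`exists_four`). Therefore the number of moved tableaux is at most
`2 (fixed - 1)`, and the total is at most `3 fixed - 2`.
-/

/-- A standard Young tableau of shape `μ`: a filling of the cells of `μ` by the
numbers `1, …, μ.card` (bijectively), strictly increasing along rows and columns,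
with value `0` outside the diagram. -/
structure SYT (μ : YoungDiagram) where
  entry : ℕ → ℕ → ℕ
  zero_outside : ∀ i j, (i, j) ∉ μ → entry i j = 0
  row_strict : ∀ i j1 j2, j1 < j2 → (i, j2) ∈ μ → entry i j1 < entry i j2
  col_strict : ∀ i1 i2 j, i1 < i2 → (i2, j) ∈ μ → entry i1 j < entry i2 j
  image_eq : μ.cells.image (fun c => entry c.1 c.2) = Finset.Icc 1 μ.card

theorem SYT.ext' {μ : YoungDiagram} {A B : SYT μ} (h : A.entry = B.entry) : A = B := by
  cases A; cases B; simp_all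

/-- The involution of values swapping `k` and `k + 1`. -/
def swapVal (k x : ℕ) : ℕ := if x = k then k + 1 else if x = k + 1 then k else x

theorem swapVal_invol (k : ℕ) : Function.Involutive (swapVal k) := by
  intro x; unfold swapVal; split_ifs <;> omega

open Classical in
/-- The Bender–Knuth involution `t_k` as a function: interchange the entries `k` and
`k + 1` if the result is again a standard Young tableau, and do nothing otherwise. -/
noncomputable def bkFun (μ : YoungDiagram) (k : ℕ) (T : SYT μ) : SYT μ :=
  if h : ∃ T' : SYT μ, T'.entry = fun i j => swapVal k (T.entry i j) then h.choose else T

theorem bkFun_pos {μ : YoungDiagram} {k : ℕ} {T : SYT μ}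
    (h : ∃ T' : SYT μ, T'.entry = fun i j => swapVal k (T.entry i j)) :
    (bkFun μ k T).entry = fun i j => swapVal k (T.entry i j) := by
  unfold bkFun; rw [dif_pos h]; exact h.choose_spec

theorem bkFun_neg {μ : YoungDiagram} {k : ℕ} {T : SYT μ}
    (h : ¬ ∃ T' : SYT μ, T'.entry = fun i j => swapVal k (T.entry i j)) :
    bkFun μ k T = T := by
  unfold bkFun; rw [dif_neg h]

theorem bkFun_invol (μ : YoungDiagram) (k : ℕ) : Function.Involutive (bkFun μ k) := by
  intro T
  by_cases h : ∃ T' : SYT μ, T'.entry = fun i j => swapVal k (T.entry i j)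
  · have e1 : (bkFun μ k T).entry = fun i j => swapVal k (T.entry i j) := bkFun_pos h
    have h2 : ∃ T'' : SYT μ, T''.entry = fun i j => swapVal k ((bkFun μ k T).entry i j) := by
      refine ⟨T, ?_⟩
      funext i j
      simp only [e1]
      exact (swapVal_invol k (T.entry i j)).symm
    apply SYT.ext'
    rw [bkFun_pos h2]
    funext i j
    simp only [e1]
    exact swapVal_invol k (T.entry i j)
  · rw [bkFun_neg h, bkFun_neg h]

/-- The Bender–Knuth involution `t_k` as a permutation of `SYT μ`. -/
noncomputable def BK (μ : YoungDiagram) (k : ℕ) : Equiv.Perm (SYT μ) :=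
  (bkFun_invol μ k).toPerm

/-- The image of the cactus group `C_n` in the permutation group of `SYT μ`:
the subgroup generated by the Bender–Knuth involutions `t_1, …, t_{n-1}`. -/
noncomputable def BKgroup (μ : YoungDiagram) : Subgroup (Equiv.Perm (SYT μ)) :=
  Subgroup.closure (BK μ '' Set.Icc 1 (μ.card - 1))

/-- The simultaneous Bender–Knuth involution `t_k` on pairs of tableaux. -/
noncomputable def BKpair (μ1 μ2 : YoungDiagram) (k : ℕ) : Equiv.Perm (SYT μ1 × SYT μ2) :=
  Equiv.prodCongr (BK μ1 k) (BK μ2 k)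

/-- The image of the cactus group acting diagonally on pairs of tableaux. -/
noncomputable def BKpairGroup (μ1 μ2 : YoungDiagram) : Subgroup (Equiv.Perm (SYT μ1 × SYT μ2)) :=
  Subgroup.closure (BKpair μ1 μ2 '' Set.Icc 1 (μ1.card - 1))

/-- The simultaneous Bender–Knuth involution `t_k` on triples of tableaux. -/
noncomputable def BKtriple (μ1 μ2 μ3 : YoungDiagram) (k : ℕ) :
    Equiv.Perm (SYT μ1 × SYT μ2 × SYT μ3) :=
  Equiv.prodCongr (BK μ1 k) (Equiv.prodCongr (BK μ2 k) (BK μ3 k))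

/-- The image of the cactus group acting diagonally on triples of tableaux. -/
noncomputable def BKtripleGroup (μ1 μ2 μ3 : YoungDiagram) :
    Subgroup (Equiv.Perm (SYT μ1 × SYT μ2 × SYT μ3)) :=
  Subgroup.closure (BKtriple μ1 μ2 μ3 '' Set.Icc 1 (μ1.card - 1))

/-- A partition is hook-shaped if its diagram has no box in position `(2,2)`
(in 1-indexed terms), i.e. no cell `(1,1)` in 0-indexed terms. -/
def HookShaped (μ : YoungDiagram) : Prop := (1, 1) ∉ μ

/-- A partition is almost hook-shaped if it is a hook plus the single box `(2,2)`. -/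
def AlmostHookShaped (μ : YoungDiagram) : Prop :=
  (1, 1) ∈ μ ∧ (1, 2) ∉ μ ∧ (2, 1) ∉ μ

/-- The value `k` occurs in the first row of `A`. -/
def SYT.inFirstRow {μ : YoungDiagram} (A : SYT μ) (k : ℕ) : Prop :=
  ∃ j, (0, j) ∈ μ ∧ A.entry 0 j = k

open scoped Classical in
/-- The set `S_{A,B}` of values lying in the first row of both `A` and `B`. -/
noncomputable def sharedFirstRow {μ1 μ2 : YoungDiagram} (A : SYT μ1) (B : SYT μ2) : Finset ℕ :=
  (Finset.Icc 1 μ1.card).filter (fun k => A.inFirstRow k ∧ B.inFirstRow k)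

/-- Tableaux (possibly of different shapes) are equal, as fillings of the plane. -/
def EqTab {μ1 μ2 : YoungDiagram} (A : SYT μ1) (B : SYT μ2) : Prop := A.entry = B.entry

/-- `B` is the transpose of `A`. -/
def EqTransposeTab {μ1 μ2 : YoungDiagram} (A : SYT μ1) (B : SYT μ2) : Prop :=
  ∀ i j, B.entry i j = A.entry j i

/-- A pair of partitions of the same `n` is viable if at most one of them is hook-shaped. -/
def ViablePairShape (μ1 μ2 : YoungDiagram) : Prop := ¬ (HookShaped μ1 ∧ HookShaped μ2)

/-- A pair of tableaux is viable if the pair of shapes is viable, the tableaux are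
different and not transposes of each other. -/
def ViableTabPair {μ1 μ2 : YoungDiagram} (A : SYT μ1) (B : SYT μ2) : Prop :=
  ViablePairShape μ1 μ2 ∧ ¬ EqTab A B ∧ ¬ EqTransposeTab A B

/-- A pair of partitions is base case if it is viable and either both are almost
hook-shaped or one is almost hook-shaped and the other is hook-shaped. -/
def BaseCasePair (μ1 μ2 : YoungDiagram) : Prop :=
  ViablePairShape μ1 μ2 ∧
    ((AlmostHookShaped μ1 ∧ AlmostHookShaped μ2) ∨
      (AlmostHookShaped μ1 ∧ HookShaped μ2) ∨ (HookShaped μ1 ∧ AlmostHookShaped μ2))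

/-- A triple of partitions is viable if at most one of them is hook-shaped. -/
def ViableTripleShape (μ1 μ2 μ3 : YoungDiagram) : Prop :=
  ¬ (HookShaped μ1 ∧ HookShaped μ2) ∧ ¬ (HookShaped μ1 ∧ HookShaped μ3) ∧
    ¬ (HookShaped μ2 ∧ HookShaped μ3)

/-- A triple of tableaux is viable if the shapes are viable, no two of the tableaux
are equal and no two are transposes of each other. -/
def ViableTabTriple {μ1 μ2 μ3 : YoungDiagram} (A : SYT μ1) (B : SYT μ2) (C : SYT μ3) : Prop :=
  ViableTripleShape μ1 μ2 μ3 ∧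
    (¬ EqTab A B ∧ ¬ EqTab A C ∧ ¬ EqTab B C) ∧
    (¬ EqTransposeTab A B ∧ ¬ EqTransposeTab A C ∧ ¬ EqTransposeTab B C)

/-- A triple of partitions is base case if it is viable and either two of them are
almost hook-shaped, or one is almost hook-shaped and another one is hook-shaped. -/
def BaseCaseTriple (μ1 μ2 μ3 : YoungDiagram) : Prop :=
  ViableTripleShape μ1 μ2 μ3 ∧
    ((AlmostHookShaped μ1 ∧ AlmostHookShaped μ2) ∨ (AlmostHookShaped μ1 ∧ AlmostHookShaped μ3) ∨
      (AlmostHookShaped μ2 ∧ AlmostHookShaped μ3) ∨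
      (AlmostHookShaped μ1 ∧ (HookShaped μ2 ∨ HookShaped μ3)) ∨
      (AlmostHookShaped μ2 ∧ (HookShaped μ1 ∨ HookShaped μ3)) ∨
      (AlmostHookShaped μ3 ∧ (HookShaped μ1 ∨ HookShaped μ2)))

/-- `A'` is the tableau obtained from `A` by deleting the box containing the largest
entry `n = μ.card`: its shape is contained in that of `A`, has one box fewer, and its
entries agree with those of `A`. -/
def IsRestriction {μ ν : YoungDiagram} (A : SYT μ) (A' : SYT ν) : Prop :=
  ν.cells ⊆ μ.cells ∧ ν.card + 1 = μ.card ∧ ∀ c ∈ ν.cells, A'.entry c.1 c.2 = A.entry c.1 c.2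

/-- A box `c` of `μ` is a corner if some standard Young tableau of shape `μ` has the
largest entry `n = μ.card` in that box. -/
def IsCornerBox (μ : YoungDiagram) (c : ℕ × ℕ) : Prop :=
  c ∈ μ ∧ ∃ A : SYT μ, A.entry c.1 c.2 = μ.card

/-- `μ` has at least two corners. -/
def HasTwoCorners (μ : YoungDiagram) : Prop :=
  ∃ c c' : ℕ × ℕ, c ≠ c' ∧ IsCornerBox μ c ∧ IsCornerBox μ c'

/-- The number of fixed points of a permutation of `SYT μ`. -/
noncomputable def fixedCount {μ : YoungDiagram} (g : Equiv.Perm (SYT μ)) : ℕ :=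
  Nat.card {A : SYT μ // g A = A}

/-! ### Fixed points of Bender–Knuth involutions -/

/-- The box `q` is the right or the lower neighbour of the box `p`. -/
def Nbr (p q : ℕ × ℕ) : Prop :=
  (p.1 = q.1 ∧ p.2 + 1 = q.2) ∨ (p.1 + 1 = q.1 ∧ p.2 = q.2)

theorem SYT.mem_Icc {μ : YoungDiagram} (T : SYT μ) {i j : ℕ} (h : (i, j) ∈ μ) :
    1 ≤ T.entry i j ∧ T.entry i j ≤ μ.card := by
  have : T.entry i j ∈ Finset.Icc 1 μ.card := by
    rw [← T.image_eq]
    exact Finset.mem_image.2 ⟨(i, j), (μ.mem_cells _).2 h, rfl⟩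
  simpa using this

theorem SYT.exists_pos {μ : YoungDiagram} (T : SYT μ) {k : ℕ} (h1 : 1 ≤ k) (h2 : k ≤ μ.card) :
    ∃ i j, (i, j) ∈ μ ∧ T.entry i j = k := by
  have : k ∈ Finset.Icc 1 μ.card := by simp [h1, h2]
  rw [← T.image_eq] at this
  obtain ⟨⟨i, j⟩, hc, he⟩ := Finset.mem_image.1 this
  exact ⟨i, j, (μ.mem_cells _).1 hc, he⟩

theorem SYT.inj {μ : YoungDiagram} (T : SYT μ) {i j i' j' : ℕ} (h : (i, j) ∈ μ) (h' : (i', j') ∈ μ)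
    (he : T.entry i j = T.entry i' j') : i = i' ∧ j = j' := by
  have hinj : Set.InjOn (fun c : ℕ × ℕ => T.entry c.1 c.2) μ.cells := by
    apply Finset.card_image_iff.1
    rw [T.image_eq]
    simp [YoungDiagram.card]
  have := hinj (by simpa using h) (by simpa using h') he
  simpa using this

instance SYT.finite (μ : YoungDiagram) : Finite (SYT μ) := by
  let f : SYT μ → (μ.cells → Fin (μ.card + 1)) := fun T c =>
    ⟨T.entry c.1.1 c.1.2,
      Nat.lt_succ_of_le (T.mem_Icc ((μ.mem_cells _).1 c.2)).2⟩
  apply Finite.of_injective f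
  intro A B h
  apply SYT.ext'
  funext i j
  by_cases hm : (i, j) ∈ μ
  · have := congrFun h ⟨(i, j), (μ.mem_cells _).2 hm⟩
    simpa [f] using this
  · rw [A.zero_outside i j hm, B.zero_outside i j hm]

theorem BK_BK {μ : YoungDiagram} (k : ℕ) (T : SYT μ) : BK μ k (BK μ k T) = T :=
  bkFun_invol μ k T

/-- `t_k` fixes a tableau in which the boxes of `k` and `k + 1` are neighbours. -/
theorem BK_eq_self {μ : YoungDiagram} {k : ℕ} {T : SYT μ} {p q : ℕ × ℕ} (hq : q ∈ μ)
    (hp : T.entry p.1 p.2 = k) (hqe : T.entry q.1 q.2 = k + 1) (h : Nbr p q) : BK μ k T = T := by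
  apply bkFun_neg
  rintro ⟨T', hT'⟩
  have e1 : T'.entry p.1 p.2 = k + 1 := by rw [hT']; simp [hp, swapVal]
  have e2 : T'.entry q.1 q.2 = k := by rw [hT']; simp [hqe, swapVal]
  rcases h with ⟨h1, h2⟩ | ⟨h1, h2⟩
  · have := T'.row_strict q.1 p.2 q.2 (by omega) hq
    rw [← h1] at this e2
    omega
  · have := T'.col_strict p.1 q.1 q.2 (by omega) hq
    rw [← h2] at this e2
    omega

theorem swapVal_lt {k a b : ℕ} (h : a < b) (hne : ¬ (a = k ∧ b = k + 1)) :
    swapVal k a < swapVal k b := by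
  unfold swapVal; split_ifs <;> omega

/-- For `1 ≤ k < n`, `t_k` interchanges `k` and `k + 1` in every tableau in which their boxes are
not neighbours. -/
theorem BK_entry {μ : YoungDiagram} {k : ℕ} {T : SYT μ} (hk : 1 ≤ k) (hk' : k + 1 ≤ μ.card)
    (h : ∀ p q : ℕ × ℕ, q ∈ μ → T.entry p.1 p.2 = k → T.entry q.1 q.2 = k + 1 → ¬ Nbr p q) :
    (BK μ k T).entry = fun i j => swapVal k (T.entry i j) := by
  apply bkFun_pos
  refine ⟨⟨fun i j => swapVal k (T.entry i j), ?_, ?_, ?_, ?_⟩, rfl⟩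
  · intro i j hij
    have h0 : swapVal k 0 = 0 := by
      unfold swapVal
      rw [if_neg (by omega), if_neg (by omega)]
    simp only [T.zero_outside i j hij, h0]
  · intro i j1 j2 hj hm
    apply swapVal_lt (T.row_strict i j1 j2 hj hm)
    rintro ⟨h1, h2⟩
    -- No entry lies strictly between `k` and `k + 1`, so the two boxes are adjacent.
    by_cases hs : j1 + 1 = j2
    · exact h (i, j1) (i, j2) hm h1 h2 (Or.inl ⟨rfl, hs⟩)
    · have a1 := T.row_strict i (j1 + 1) j2 (by omega) hm
      have a2 := T.row_strict i j1 (j1 + 1) (by omega)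
        (μ.up_left_mem le_rfl (by omega) hm)
      omega
  · intro i1 i2 j hi hm
    apply swapVal_lt (T.col_strict i1 i2 j hi hm)
    rintro ⟨h1, h2⟩
    by_cases hs : i1 + 1 = i2
    · exact h (i1, j) (i2, j) hm h1 h2 (Or.inr ⟨hs, rfl⟩)
    · have a1 := T.col_strict (i1 + 1) i2 j (by omega) hm
      have a2 := T.col_strict i1 (i1 + 1) j (by omega)
        (μ.up_left_mem (by omega) le_rfl hm)
      omega
  · have : μ.cells.image (fun c => swapVal k (T.entry c.1 c.2))
        = (μ.cells.image (fun c => T.entry c.1 c.2)).image (swapVal k) := by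
      rw [Finset.image_image]; rfl
    rw [this, T.image_eq]
    have hmaps : ∀ x ∈ Finset.Icc 1 μ.card, swapVal k x ∈ Finset.Icc 1 μ.card := by
      intro x hx
      simp only [Finset.mem_Icc] at hx ⊢
      unfold swapVal; split_ifs <;> omega
    ext x
    constructor
    · intro hx
      obtain ⟨y, hy, rfl⟩ := Finset.mem_image.1 hx
      exact hmaps y hy
    · intro hx
      exact Finset.mem_image.2 ⟨swapVal k x, hmaps x hx, swapVal_invol k x⟩

/-! ### The positions of the entries up to four -/

/-- The left and the upper neighbour of a box of `μ` lie in `μ` and carry smaller entries. -/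
theorem SYT.pred {μ : YoungDiagram} (T : SYT μ) {i j : ℕ} (h : (i, j) ∈ μ) :
    (0 < i → (i - 1, j) ∈ μ ∧ T.entry (i - 1) j < T.entry i j) ∧
    (0 < j → (i, j - 1) ∈ μ ∧ T.entry i (j - 1) < T.entry i j) :=
  ⟨fun hi => ⟨μ.up_left_mem (by omega) le_rfl h, T.col_strict _ _ _ (by omega) h⟩,
    fun hj => ⟨μ.up_left_mem le_rfl (by omega) h, T.row_strict _ _ _ (by omega) h⟩⟩

/-- If `3` and `4` are not neighbours, then exactly one of them is a neighbour of `2`. -/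
theorem nbr_two {μ : YoungDiagram} {T : SYT μ} {p2 p3 p4 : ℕ × ℕ}
    (h2 : p2 ∈ μ) (h3 : p3 ∈ μ) (h4 : p4 ∈ μ)
    (e2 : T.entry p2.1 p2.2 = 2) (e3 : T.entry p3.1 p3.2 = 3) (e4 : T.entry p4.1 p4.2 = 4)
    (hn : ¬ Nbr p3 p4) : (Nbr p2 p4 ∧ ¬ Nbr p2 p3) ∨ (Nbr p2 p3 ∧ ¬ Nbr p2 p4) := by
  obtain ⟨a2, b2⟩ := p2
  obtain ⟨a3, b3⟩ := p3
  obtain ⟨a4, b4⟩ := p4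
  simp only [Nbr] at *
  have key1 : ∀ i j, (i, j) ∈ μ → T.entry i j = 1 → i = 0 ∧ j = 0 := by
    intro i j hm he
    have hp := T.pred hm
    constructor
    · by_contra hi
      have a := hp.1 (by omega)
      have b := T.mem_Icc a.1
      omega
    · by_contra hi
      have a := hp.2 (by omega)
      have b := T.mem_Icc a.1
      omega
  -- A box with an entry below `4` is one of those of `1`, `2`, `3`.
  have key : ∀ i j, (i, j) ∈ μ →
      (T.entry i j < 2 → i = 0 ∧ j = 0) ∧
      (T.entry i j < 3 → (i = 0 ∧ j = 0) ∨ (i = a2 ∧ j = b2)) ∧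
      (T.entry i j < 4 → (i = 0 ∧ j = 0) ∨ (i = a2 ∧ j = b2) ∨ (i = a3 ∧ j = b3)) := by
    intro i j hm
    have b := T.mem_Icc hm
    have k1 := key1 i j hm
    have k2 : T.entry i j = 2 → i = a2 ∧ j = b2 := fun h => T.inj hm h2 (h.trans e2.symm)
    have k3 : T.entry i j = 3 → i = a3 ∧ j = b3 := fun h => T.inj hm h3 (h.trans e3.symm)
    refine ⟨fun h => ?_, fun h => ?_, fun h => ?_⟩
    · exact k1 (by omega)
    · rcases (by omega : T.entry i j = 1 ∨ T.entry i j = 2) with h | h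
      · exact Or.inl (k1 h)
      · exact Or.inr (k2 h)
    · rcases (by omega : T.entry i j = 1 ∨ T.entry i j = 2 ∨ T.entry i j = 3) with h | h | h
      · exact Or.inl (k1 h)
      · exact Or.inr (Or.inl (k2 h))
      · exact Or.inr (Or.inr (k3 h))
  have h00 : T.entry 0 0 = 1 := by
    obtain ⟨i, j, hm, he⟩ := T.exists_pos (k := 1) le_rfl (by have := T.mem_Icc h2; omega)
    obtain ⟨rfl, rfl⟩ := key1 i j hm he
    exact he
  have n2 : ¬ (a2 = 0 ∧ b2 = 0) := by rintro ⟨rfl, rfl⟩; omega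
  have n3 : ¬ (a3 = 0 ∧ b3 = 0) := by rintro ⟨rfl, rfl⟩; omega
  have n4 : ¬ (a4 = 0 ∧ b4 = 0) := by rintro ⟨rfl, rfl⟩; omega
  have n23 : ¬ (a2 = a3 ∧ b2 = b3) := by rintro ⟨rfl, rfl⟩; omega
  have n24 : ¬ (a2 = a4 ∧ b2 = b4) := by rintro ⟨rfl, rfl⟩; omega
  have n34 : ¬ (a3 = a4 ∧ b3 = b4) := by rintro ⟨rfl, rfl⟩; omega
  have q2a : 0 < a2 → a2 - 1 = 0 ∧ b2 = 0 := fun h =>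
    (key _ _ ((T.pred h2).1 h).1).1 (by have := ((T.pred h2).1 h).2; omega)
  have q2b : 0 < b2 → a2 = 0 ∧ b2 - 1 = 0 := fun h =>
    (key _ _ ((T.pred h2).2 h).1).1 (by have := ((T.pred h2).2 h).2; omega)
  have q3a := fun h => (key _ _ ((T.pred h3).1 h).1).2.1 (by have := ((T.pred h3).1 h).2; omega)
  have q3b := fun h => (key _ _ ((T.pred h3).2 h).1).2.1 (by have := ((T.pred h3).2 h).2; omega)
  have q4a := fun h => (key _ _ ((T.pred h4).1 h).1).2.2 (by have := ((T.pred h4).1 h).2; omega)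
  have q4b := fun h => (key _ _ ((T.pred h4).2 h).1).2.2 (by have := ((T.pred h4).2 h).2; omega)
  clear key key1 h00 e2 e3 e4 h2 h3 h4
  have c2 : (a2 = 0 ∧ b2 = 1) ∨ (a2 = 1 ∧ b2 = 0) := by omega
  rcases c2 with ⟨rfl, rfl⟩ | ⟨rfl, rfl⟩
  · have c3 : (a3 = 1 ∧ b3 = 0) ∨ (a3 = 0 ∧ b3 = 2) := by clear hn q4a q4b; omega
    rcases c3 with ⟨rfl, rfl⟩ | ⟨rfl, rfl⟩
    · have c4 : (a4 = 1 ∧ b4 = 1) ∨ (a4 = 0 ∧ b4 = 2) ∨ (a4 = 2 ∧ b4 = 0) := by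
        clear hn q2a q2b q3a q3b n2 n3 n23
        rcases Nat.eq_zero_or_pos a4 with ha | ha <;> rcases Nat.eq_zero_or_pos b4 with hb | hb <;>
          simp only [ha, hb, forall_true_left, lt_irrefl, false_imp_iff] at q4a q4b <;> omega
      rcases c4 with ⟨rfl, rfl⟩ | ⟨rfl, rfl⟩ | ⟨rfl, rfl⟩ <;> simp at hn ⊢
    · have c4 : (a4 = 1 ∧ b4 = 0) ∨ (a4 = 0 ∧ b4 = 3) := by
        clear hn q2a q2b q3a q3b n2 n3 n23
        rcases Nat.eq_zero_or_pos a4 with ha | ha <;> rcases Nat.eq_zero_or_pos b4 with hb | hb <;>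
          simp only [ha, hb, forall_true_left, lt_irrefl, false_imp_iff] at q4a q4b <;> omega
      rcases c4 with ⟨rfl, rfl⟩ | ⟨rfl, rfl⟩ <;> simp at hn ⊢
  · have c3 : (a3 = 0 ∧ b3 = 1) ∨ (a3 = 2 ∧ b3 = 0) := by clear hn q4a q4b; omega
    rcases c3 with ⟨rfl, rfl⟩ | ⟨rfl, rfl⟩
    · have c4 : (a4 = 1 ∧ b4 = 1) ∨ (a4 = 0 ∧ b4 = 2) ∨ (a4 = 2 ∧ b4 = 0) := by
        clear hn q2a q2b q3a q3b n2 n3 n23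
        rcases Nat.eq_zero_or_pos a4 with ha | ha <;> rcases Nat.eq_zero_or_pos b4 with hb | hb <;>
          simp only [ha, hb, forall_true_left, lt_irrefl, false_imp_iff] at q4a q4b <;> omega
      rcases c4 with ⟨rfl, rfl⟩ | ⟨rfl, rfl⟩ | ⟨rfl, rfl⟩ <;> simp at hn ⊢
    · have c4 : (a4 = 0 ∧ b4 = 1) ∨ (a4 = 3 ∧ b4 = 0) := by
        clear hn q2a q2b q3a q3b n2 n3 n23
        rcases Nat.eq_zero_or_pos a4 with ha | ha <;> rcases Nat.eq_zero_or_pos b4 with hb | hb <;>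
          simp only [ha, hb, forall_true_left, lt_irrefl, false_imp_iff] at q4a q4b <;> omega
      rcases c4 with ⟨rfl, rfl⟩ | ⟨rfl, rfl⟩ <;> simp at hn ⊢

/-- If `4` is a neighbour of `2` and `3` is not, then `3` and `4` are neighbours in `t₂ T`. -/
theorem BK_fixed_of_nbr {μ : YoungDiagram} {T : SYT μ} {p2 p3 p4 : ℕ × ℕ}
    (h2 : p2 ∈ μ) (h3 : p3 ∈ μ) (h4 : p4 ∈ μ)
    (e2 : T.entry p2.1 p2.2 = 2) (e3 : T.entry p3.1 p3.2 = 3) (e4 : T.entry p4.1 p4.2 = 4)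
    (h24 : Nbr p2 p4) (h23 : ¬ Nbr p2 p3) : BK μ 3 (BK μ 2 T) = BK μ 2 T := by
  have hc := (T.mem_Icc h4).2
  have hE := BK_entry (T := T) (k := 2) (by omega) (by omega) (by
    intro p q hq hp hqe hN
    have hp' : p ∈ μ := by
      by_contra hno
      have := T.zero_outside p.1 p.2 hno
      omega
    have r1 := T.inj hp' h2 (hp.trans e2.symm)
    have r2 := T.inj hq h3 (hqe.trans e3.symm)
    rw [Prod.ext r1.1 r1.2, Prod.ext r2.1 r2.2] at hN
    exact h23 hN)
  refine BK_eq_self (p := p2) (q := p4) h4 ?_ ?_ h24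
  · rw [hE]; simp [e2, swapVal]
  · rw [hE]; simp [e4, swapVal]

/-- If `t₃` moves `T`, then it fixes `t₂ T` or `t₂ t₃ T`. -/
theorem moved_cover {μ : YoungDiagram} (hμ : 4 ≤ μ.card) {T : SYT μ} (hT : BK μ 3 T ≠ T) :
    BK μ 3 (BK μ 2 T) = BK μ 2 T ∨ BK μ 3 (BK μ 2 (BK μ 3 T)) = BK μ 2 (BK μ 3 T) := by
  obtain ⟨a2, b2, h2, e2⟩ := T.exists_pos (k := 2) (by omega) (by omega)
  obtain ⟨a3, b3, h3, e3⟩ := T.exists_pos (k := 3) (by omega) (by omega)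
  obtain ⟨a4, b4, h4, e4⟩ := T.exists_pos (k := 4) (by omega) (by omega)
  have hn : ¬ Nbr (a3, b3) (a4, b4) := fun h => hT (BK_eq_self h4 e3 e4 h)
  rcases nbr_two h2 h3 h4 e2 e3 e4 hn with ⟨hx, hy⟩ | ⟨hx, hy⟩
  · exact Or.inl (BK_fixed_of_nbr h2 h3 h4 e2 e3 e4 hx hy)
  · right
    have hE := BK_entry (T := T) (k := 3) (by omega) (by omega)
      (fun p q hq hp hqe hN => hT (BK_eq_self hq hp hqe hN))
    refine BK_fixed_of_nbr h2 h4 h3 ?_ ?_ ?_ hx hy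
    · rw [hE]; simp [e2, swapVal]
    · rw [hE]; simp [e4, swapVal]
    · rw [hE]; simp [e3, swapVal]

/-- If `4` is in the box `(1, 1)`, then `3` is its upper or its left neighbour. -/
theorem BK_fixed_of_four {μ : YoungDiagram} {T : SYT μ} (hm : (1, 1) ∈ μ)
    (h : T.entry 1 1 = 4) : BK μ 3 T = T := by
  have m01 : (0, 1) ∈ μ := μ.up_left_mem (by omega) le_rfl hm
  have m10 : (1, 0) ∈ μ := μ.up_left_mem le_rfl (by omega) hm
  have m00 : (0, 0) ∈ μ := μ.up_left_mem (by omega) (by omega) hm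
  have b := T.mem_Icc m00
  have r1 := T.row_strict 0 0 1 (by omega) m01
  have r2 := T.row_strict 1 0 1 (by omega) hm
  have r3 := T.col_strict 0 1 0 (by omega) m10
  have r4 := T.col_strict 0 1 1 (by omega) hm
  have hne : T.entry 0 1 ≠ T.entry 1 0 := fun he => by
    have := T.inj m01 m10 he
    omega
  rcases (by omega : T.entry 0 1 = 3 ∨ T.entry 1 0 = 3) with h3 | h3
  · exact BK_eq_self (p := (0, 1)) (q := (1, 1)) hm h3 h (by simp [Nbr])
  · exact BK_eq_self (p := (1, 0)) (q := (1, 1)) hm h3 h (by simp [Nbr])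

/-- `t₂` does not change the box of `4`, whether or not it moves the tableau. -/
theorem BK_two_four {μ : YoungDiagram} {T : SYT μ} (h : T.entry 1 1 = 4) :
    (BK μ 2 T).entry 1 1 = 4 := by
  by_cases hx : ∃ T' : SYT μ, T'.entry = fun i j => swapVal 2 (T.entry i j)
  · have : (BK μ 2 T).entry = _ := bkFun_pos hx
    rw [this]; simp [h, swapVal]
  · have : BK μ 2 T = T := bkFun_neg hx
    rw [this, h]

/-! ### A tableau with entry four in the box `(1, 1)` -/

/-- The linear order on boxes that first lists the `2 × 2` square in the corner and then all other
boxes, reading each of the two parts row by row. -/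
def boxKey (c : ℕ × ℕ) : ℕ ×ₗ (ℕ ×ₗ ℕ) :=
  toLex (if c.1 ≤ 1 ∧ c.2 ≤ 1 then 0 else 1, toLex c)

theorem boxKey_inj {c d : ℕ × ℕ} (h : boxKey c = boxKey d) : c = d := by
  simp only [boxKey, EmbeddingLike.apply_eq_iff_eq, Prod.mk.injEq] at h
  exact h.2

theorem boxKey_lt {i j i' j' : ℕ} (h : (i = i' ∧ j < j') ∨ (i < i' ∧ j = j')) :
    boxKey (i, j) < boxKey (i', j') := by
  simp only [boxKey, Prod.Lex.toLex_lt_toLex]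
  split_ifs <;> omega

open Classical in
/-- The tableau that numbers the boxes of `μ` in the order of `boxKey`, so that a box receives the
number of boxes of `μ` up to and including itself. -/
noncomputable def squareTab (μ : YoungDiagram) : SYT μ :=
  let r : ℕ × ℕ → ℕ := fun c => (μ.cells.filter (fun d => boxKey d ≤ boxKey c)).card
  have hr : ∀ c d : ℕ × ℕ, d ∈ μ → boxKey c < boxKey d → r c < r d := by
    intro c d hd hlt
    apply Finset.card_lt_card
    rw [Finset.ssubset_iff_of_subset]
    · exact ⟨d, by simpa using hd, by simp [hlt]⟩
    · intro x hx
      simp only [Finset.mem_filter] at hx ⊢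
      exact ⟨hx.1, hx.2.trans hlt.le⟩
  { entry := fun i j => if (i, j) ∈ μ then r (i, j) else 0
    zero_outside := fun i j h => by simp [h]
    row_strict := fun i j1 j2 hj hm => by
      have hm1 : (i, j1) ∈ μ := μ.up_left_mem le_rfl hj.le hm
      simp only [hm, hm1, if_true]
      exact hr _ _ hm (boxKey_lt (by omega))
    col_strict := fun i1 i2 j hi hm => by
      have hm1 : (i1, j) ∈ μ := μ.up_left_mem hi.le le_rfl hm
      simp only [hm, hm1, if_true]
      exact hr _ _ hm (boxKey_lt (by omega))
    image_eq := by
      have : μ.cells.image (fun c => if (c.1, c.2) ∈ μ then r (c.1, c.2) else 0)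
          = μ.cells.image r := by
        apply Finset.image_congr
        intro c hc
        have hc' : c ∈ μ := by simpa using hc
        simp [hc']
      rw [this]
      apply Finset.eq_of_subset_of_card_le
      · intro x hx
        obtain ⟨c, hc, rfl⟩ := Finset.mem_image.1 hx
        rw [Finset.mem_Icc]
        refine ⟨Finset.card_pos.2 ⟨c, by simpa using hc⟩, Finset.card_le_card (Finset.filter_subset _ _)⟩
      · rw [Finset.card_image_of_injOn]
        · simp [YoungDiagram.card]
        · intro c hc d hd he
          have hc' : c ∈ μ := by simpa using hc
          have hd' : d ∈ μ := by simpa using hd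
          rcases lt_trichotomy (boxKey c) (boxKey d) with h | h | h
          · exact absurd he (hr c d hd' h).ne
          · exact boxKey_inj h
          · exact absurd he (hr d c hc' h).ne' }

theorem exists_four {μ : YoungDiagram} (hm : (1, 1) ∈ μ) : ∃ T : SYT μ, T.entry 1 1 = 4 := by
  classical
  refine ⟨squareTab μ, ?_⟩
  have m01 : (0, 1) ∈ μ := μ.up_left_mem (by omega) le_rfl hm
  have m10 : (1, 0) ∈ μ := μ.up_left_mem le_rfl (by omega) hm
  have m00 : (0, 0) ∈ μ := μ.up_left_mem (by omega) (by omega) hm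
  have hf : μ.cells.filter (fun d => boxKey d ≤ boxKey (1, 1))
      = {(0, 0), (0, 1), (1, 0), (1, 1)} := by
    ext ⟨i, j⟩
    simp only [Finset.mem_filter, YoungDiagram.mem_cells, Finset.mem_insert, Finset.mem_singleton,
      Prod.mk.injEq]
    constructor
    · rintro ⟨-, h⟩
      have hs : i ≤ 1 ∧ j ≤ 1 := by
        by_contra hs
        simp [boxKey, Prod.Lex.toLex_le_toLex, hs] at h
      omega
    · rintro (⟨rfl, rfl⟩ | ⟨rfl, rfl⟩ | ⟨rfl, rfl⟩ | ⟨rfl, rfl⟩) <;>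
        simp [*, boxKey, Prod.Lex.toLex_le_toLex]
  have : (squareTab μ).entry 1 1
      = (μ.cells.filter (fun d => boxKey d ≤ boxKey (1, 1))).card := by
    simp only [squareTab, hm, if_true]
  rw [this, hf]
  rfl

/-! ### Counting -/

/-- Theorem. For any non-hook-shaped partition `μ` of `n ≥ 6`, the number of fixed
points of `t_3` on `SYT(μ)` is strictly greater than `|SYT(μ)| / 3`. -/
theorem bk_t3_fixed_points_third (n : ℕ) (μ : YoungDiagram) (hμ : μ.card = n)
    (hn : 6 ≤ n) (hh : ¬ HookShaped μ) :
    Nat.card (SYT μ) < 3 * fixedCount (BK μ 3) := by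
  classical
  have hm : (1, 1) ∈ μ := not_not.1 hh
  obtain ⟨T₀, hT₀⟩ := exists_four hm
  have hfix₀ : BK μ 3 T₀ = T₀ := BK_fixed_of_four hm hT₀
  have hfix₁ : BK μ 3 (BK μ 2 T₀) = BK μ 2 T₀ := BK_fixed_of_four hm (BK_two_four hT₀)
  have : Fintype (SYT μ) := Fintype.ofFinite _
  let F : Finset (SYT μ) := Finset.univ.filter (fun T => BK μ 3 T = T)
  let N : Finset (SYT μ) := Finset.univ.filter (fun T => ¬ BK μ 3 T = T)
  have hF : fixedCount (BK μ 3) = F.card := by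
    rw [fixedCount, Nat.card_eq_fintype_card, Fintype.card_subtype]
  have htot : F.card + N.card = Nat.card (SYT μ) := by
    rw [Nat.card_eq_fintype_card]
    exact Finset.card_filter_add_card_filter_not _
  have hT₀F : T₀ ∈ F := by simp [F, hfix₀]
  have hFpos : 0 < F.card := Finset.card_pos.2 ⟨T₀, hT₀F⟩
  -- A moved preimage of `T₀` under `t₂` or `t₂ t₃` would be `t₂ T₀`, which `t₃` fixes; hence both
  -- injections avoid `T₀`.
  have h1 : (N.filter (fun T => BK μ 2 T ∈ F)).card ≤ (F.erase T₀).card := by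
    apply Finset.card_le_card_of_injOn (fun T => BK μ 2 T)
    · intro T hT
      simp only [N, F, Finset.coe_filter, Finset.mem_filter, Finset.mem_univ, true_and,
        Set.mem_ofPred_eq] at hT
      simp only [F, Finset.mem_coe, Finset.mem_erase, Finset.mem_filter, Finset.mem_univ, true_and]
      refine ⟨fun h => hT.1 ?_, hT.2⟩
      have : T = BK μ 2 T₀ := by rw [← h, BK_BK]
      rw [this, hfix₁]
    · exact (BK μ 2).injective.injOn
  have h2 : (N.filter (fun T => BK μ 2 (BK μ 3 T) ∈ F)).card ≤ (F.erase T₀).card := by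
    apply Finset.card_le_card_of_injOn (fun T => BK μ 2 (BK μ 3 T))
    · intro T hT
      simp only [N, F, Finset.coe_filter, Finset.mem_filter, Finset.mem_univ, true_and,
        Set.mem_ofPred_eq] at hT
      simp only [F, Finset.mem_coe, Finset.mem_erase, Finset.mem_filter, Finset.mem_univ, true_and]
      refine ⟨fun h => hT.1 ?_, hT.2⟩
      have h' : BK μ 3 T = BK μ 2 T₀ := by rw [← h, BK_BK]
      have : T = BK μ 2 T₀ := by rw [← hfix₁, ← h', BK_BK]
      rw [this, hfix₁]
    · exact ((BK μ 2).injective.comp (BK μ 3).injective).injOn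
  have hcov : N ⊆ N.filter (fun T => BK μ 2 T ∈ F) ∪
      N.filter (fun T => BK μ 2 (BK μ 3 T) ∈ F) := by
    intro T hT
    have hT' : BK μ 3 T ≠ T := by simpa [N] using hT
    simp only [Finset.mem_union, Finset.mem_filter (s := N)]
    rcases moved_cover (by omega) hT' with h | h
    · exact Or.inl ⟨hT, by simp [F, h]⟩
    · exact Or.inr ⟨hT, by simp [F, h]⟩
  have hN := (Finset.card_le_card hcov).trans (Finset.card_union_le _ _)
  rw [Finset.card_erase_of_mem hT₀F] at h1 h2
  omega
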